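/- Let J* ≥ 0 solve the Bellman equation J*(x) = min_{u∈U(x)} max_{w∈W(x)} [g(x,u,w) + J*(f(x,u,w))], with max_{w∈W(x)} g(x,u,w) ≥ 0 for all feasible (x,u). Let μ*(x) be a minimizer in the Bellman equation. Then for every admissible disturbance sequence w(·) and every horizon k, the closed-loop trajectory x(t+1) = f(x(t), μ*(x(t)), w(t)) satisfies Σ_{t=0}^{k} g(x(t), μ*(x(t)), w(t)) ≤ J*(x₀). In particular the infinite-horizon worst-case cost under policy μ* is at most J*(x₀), which is finite. -/

import Mathlib

theorem sum_range_add_le_of_add_succ_le {M : Type*} [AddCommMonoid M] [Preorder M]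
    [IsOrderedAddMonoid M] {c V : ℕ → M} (h : ∀ t, c t + V (t + 1) ≤ V t) (n : ℕ) :
    ∑ t ∈ Finset.range n, c t + V n ≤ V 0 := by
  induction n with
  | zero => rw [Finset.sum_range_zero, zero_add]
  | succ n ih =>
    calc ∑ t ∈ Finset.range (n + 1), c t + V (n + 1)
        = ∑ t ∈ Finset.range n, c t + (c n + V (n + 1)) := by
          rw [Finset.sum_range_succ, add_assoc]
      _ ≤ ∑ t ∈ Finset.range n, c t + V n := by gcongr; exact h n
      _ ≤ V 0 := ih

section PolicySupersolution

variable {X U W M : Type*} [AddCommMonoid M] [Preorder M]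
  {Wc : X → Set W} {g : X → U → W → M} {f : X → U → W → X} {μ : X → U} {V : X → M}

/-- `V` is a supersolution of the worst-case Bellman equation for the fixed policy `μ`: whatever
the admissible disturbance, `V` pays for the current stage cost and for its own value at the next
state. Quantifying over disturbances, rather than taking a maximum over them, avoids assuming that
the worst case is attained. -/
def IsPolicySupersolution (Wc : X → Set W) (g : X → U → W → M) (f : X → U → W → X)
    (μ : X → U) (V : X → M) : Prop :=
  ∀ x, ∀ w ∈ Wc x, g x (μ x) w + V (f x (μ x) w) ≤ V x

theorem isPolicySupersolution_iff_forall_mem_upperBounds :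
    IsPolicySupersolution Wc g f μ V ↔
      ∀ x, V x ∈ upperBounds {z | ∃ w ∈ Wc x, z = g x (μ x) w + V (f x (μ x) w)} := by
  constructor
  · rintro h x _ ⟨w, hw, rfl⟩
    exact h x w hw
  · exact fun h x w hw ↦ h x ⟨w, hw, rfl⟩

theorem IsPolicySupersolution.sum_range_add_le [IsOrderedAddMonoid M]
    (hV : IsPolicySupersolution Wc g f μ V) {x : ℕ → X} {w : ℕ → W}
    (hadm : ∀ t, w t ∈ Wc (x t)) (hdyn : ∀ t, x (t + 1) = f (x t) (μ (x t)) (w t)) (n : ℕ) :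
    ∑ t ∈ Finset.range n, g (x t) (μ (x t)) (w t) + V (x n) ≤ V (x 0) := by
  have dissipation (t : ℕ) : g (x t) (μ (x t)) (w t) + V (x (t + 1)) ≤ V (x t) := by
    rw [hdyn t]
    exact hV (x t) (w t) (hadm t)
  exact sum_range_add_le_of_add_succ_le (V := fun t ↦ V (x t)) dissipation n

theorem stmt19_general [IsOrderedAddMonoid M] (hV : IsPolicySupersolution Wc g f μ V)
    (hV_nonneg : ∀ x, 0 ≤ V x) {x : ℕ → X} {w : ℕ → W}
    (hadm : ∀ t, w t ∈ Wc (x t)) (hdyn : ∀ t, x (t + 1) = f (x t) (μ (x t)) (w t)) (n : ℕ) :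
    ∑ t ∈ Finset.range n, g (x t) (μ (x t)) (w t) ≤ V (x 0) :=
  (le_add_of_nonneg_right (hV_nonneg (x n))).trans (hV.sum_range_add_le hadm hdyn n)

end PolicySupersolution

theorem stmt19 {X U W : Type*}
    (Uc : X → Set U) (Wc : X → Set W)
    (g : X → U → W → ℝ) (f : X → U → W → X)
    (hg : ∀ x, ∀ u ∈ Uc x, ∃ M, IsGreatest {z : ℝ | ∃ w ∈ Wc x, z = g x u w} M ∧ 0 ≤ M)
    (Jstar : X → ℝ) (hJstar_nonneg : ∀ x, 0 ≤ Jstar x)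
    (hBellman : ∀ x, IsLeast {v : ℝ | ∃ u ∈ Uc x,
        IsGreatest {z : ℝ | ∃ w ∈ Wc x, z = g x u w + Jstar (f x u w)} v} (Jstar x))
    (μ : X → U)
    (hμ_feas : ∀ x, μ x ∈ Uc x)
    (hμ_opt : ∀ x, IsGreatest {z : ℝ | ∃ w ∈ Wc x,
        z = g x (μ x) w + Jstar (f x (μ x) w)} (Jstar x))
    (x : ℕ → X) (w : ℕ → W)
    (hadm : ∀ t, w t ∈ Wc (x t))
    (hdyn : ∀ t, x (t+1) = f (x t) (μ (x t)) (w t)) :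
    ∀ k, ∑ t ∈ Finset.range (k+1), g (x t) (μ (x t)) (w t) ≤ Jstar (x 0) := by
  have hJ : IsPolicySupersolution Wc g f μ Jstar :=
    isPolicySupersolution_iff_forall_mem_upperBounds.2 fun x ↦ (hμ_opt x).2
  exact fun k ↦ stmt19_general hJ hJstar_nonneg hadm hdyn (k + 1)
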